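/- arXiv:2105.04377 — 2 statements merged into one kernel-verified Lean document; each statement's English description precedes it below -/
import Mathlib

section
/- Let d and (d_n)_{n∈ℕ} be metrics on a set X making X a locally compact length space (for each metric), such that d_n converges uniformly to d, i.e. sup_{(a,b)∈X×X} |d_n(a,b) − d(a,b)| → 0. Then for all x, y ∈ X and t, s ≥ 0, the Hausdorff distances of closed balls converge: d_H(B̄_t(x), B̄_s(y)) = lim_{n→∞} d_H^n(B̄ⁿ_t(x), B̄ⁿ_s(y)), where B̄ⁿ and d_H^n denote closed balls and Hausdorff distance with respect to d_n, and B̄, d_H those with respect to d. -/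
open Metric Set

/-- The distance function of an explicit metric-space structure. -/
def mdist {X : Type*} (m : MetricSpace X) (x y : X) : ℝ :=
  @dist X m.toPseudoMetricSpace.toDist x y

/-- The closed ball of an explicit metric-space structure. -/
def mClosedBall {X : Type*} (m : MetricSpace X) (x : X) (r : ℝ) : Set X :=
  @Metric.closedBall X m.toPseudoMetricSpace x r

/-- The Hausdorff distance of an explicit metric-space structure. -/
noncomputable def mHausdorffDist {X : Type*} (m : MetricSpace X) (A B : Set X) : ℝ :=
  @Metric.hausdorffDist X m.toPseudoMetricSpace A B

/-- `(X, m)` is locally compact. -/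
def mLocallyCompact {X : Type*} (m : MetricSpace X) : Prop :=
  @LocallyCompactSpace X
    (@UniformSpace.toTopologicalSpace X m.toPseudoMetricSpace.toUniformSpace)

/-- `(X, m)` is a length space: the distance between any two points equals the infimum of
the lengths of continuous curves joining them. -/
def mIsLengthSpace {X : Type*} (m : MetricSpace X) : Prop :=
  ∀ x y : X,
    @edist X (@PseudoEMetricSpace.toEDist X
      (@PseudoMetricSpace.toPseudoEMetricSpace X m.toPseudoMetricSpace)) x y =
    ⨅ (γ : ℝ → X)
      (_ : @ContinuousOn ℝ X _
        (@UniformSpace.toTopologicalSpace X m.toPseudoMetricSpace.toUniformSpace)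
        γ (Set.Icc (0:ℝ) 1))
      (_ : γ 0 = x) (_ : γ 1 = y),
      @eVariationOn ℝ _ X
        (@PseudoMetricSpace.toPseudoEMetricSpace X m.toPseudoMetricSpace)
        γ (Set.Icc (0:ℝ) 1)

/-!
Regard the identity of `X` as a map `f : (X, d) → (X, d_n)` changing distances by at most `ε`.
Such a map changes the Hausdorff distance between two bounded sets by at most `ε`. In a length
space, enlarging the radius of a closed ball by `ε` moves it by at most `ε` in Hausdorff distance,
so the image under `f` of a ball is `2 * ε`-close to the ball of the same radius about the image of
the centre. By the triangle inequality the Hausdorff distances between corresponding pairs of balls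
differ by at most `2 * ε + ε + 2 * ε`.
-/

/-- The approximate betweenness property by which length spaces enter the comparison of closed
balls, in the form of Mathlib's `exists_dist_le_lt` for normed spaces. It is phrased by distances
rather than by curves, so that the rational numbers are an example. -/
def IsApproxGeodesic (X : Type*) [PseudoMetricSpace X] : Prop :=
  ∀ ⦃x z : X⦄ ⦃δ ε : ℝ⦄, 0 ≤ δ → 0 < ε → dist x z < δ + ε → ∃ p, dist x p ≤ δ ∧ dist p z < ε

section LengthSpace

lemma edist_add_edist_le_eVariationOn_Icc {α X : Type*} [LinearOrder α] [PseudoEMetricSpace X]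
    (γ : α → X) {a b u : α} (hu : u ∈ Icc a b) :
    edist (γ a) (γ u) + edist (γ u) (γ b) ≤ eVariationOn γ (Icc a b) := by
  have hsplit := eVariationOn.Icc_add_Icc γ hu.1 hu.2 (mem_univ u)
  simp only [univ_inter] at hsplit
  rw [← hsplit]
  gcongr
  · exact eVariationOn.edist_le γ (left_mem_Icc.2 hu.1) (right_mem_Icc.2 hu.1)
  · exact eVariationOn.edist_le γ (left_mem_Icc.2 hu.2) (right_mem_Icc.2 hu.2)

lemma exists_dist_le_lt_of_eVariationOn_lt {α X : Type*} [ConditionallyCompleteLinearOrder α]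
    [TopologicalSpace α] [OrderTopology α] [DenselyOrdered α] [PseudoMetricSpace X] {γ : α → X}
    {a b : α} {δ ε : ℝ} (hab : a ≤ b) (hγ : ContinuousOn γ (Icc a b)) (hδ : 0 ≤ δ) (hε : 0 < ε)
    (hlen : eVariationOn γ (Icc a b) < ENNReal.ofReal (δ + ε)) :
    ∃ p, dist (γ a) p ≤ δ ∧ dist p (γ b) < ε := by
  rcases le_or_gt (dist (γ a) (γ b)) δ with hnear | hfar
  · exact ⟨γ b, hnear, by rwa [dist_self]⟩
  have hcont : ContinuousOn (fun v => dist (γ a) (γ v)) (Icc a b) := by fun_prop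
  obtain ⟨u, hu, hdist : dist (γ a) (γ u) = δ⟩ :=
    intermediate_value_Icc hab hcont ⟨by rwa [dist_self], hfar.le⟩
  have hsum : dist (γ a) (γ u) + dist (γ u) (γ b) < δ + ε := by
    have hlt := (edist_add_edist_le_eVariationOn_Icc γ hu).trans_lt hlen
    rwa [edist_dist, edist_dist, ← ENNReal.ofReal_add dist_nonneg dist_nonneg,
      ENNReal.ofReal_lt_ofReal_iff (by positivity)] at hlt
  exact ⟨γ u, hdist.le, by linarith⟩

lemma mIsLengthSpace.isApproxGeodesic {X : Type*} {m : MetricSpace X} (hm : mIsLengthSpace m) :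
    IsApproxGeodesic X := by
  intro x z δ ε hδ hε hxz
  have hlt : edist x z < ENNReal.ofReal (δ + ε) := by
    rwa [edist_dist, ENNReal.ofReal_lt_ofReal_iff (by positivity)]
  rw [hm x z] at hlt
  simp only [iInf_lt_iff] at hlt
  obtain ⟨γ, hγ, rfl, rfl, hlen⟩ := hlt
  exact exists_dist_le_lt_of_eVariationOn_lt zero_le_one hγ hδ hε hlen

end LengthSpace

section HausdorffDist

lemma abs_hausdorffDist_sub_hausdorffDist_le {X : Type*} [PseudoMetricSpace X]
    {A A' B B' : Set X} (hA : hausdorffEDist A A' ≠ ⊤) (hB : hausdorffEDist B B' ≠ ⊤) :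
    |hausdorffDist A B - hausdorffDist A' B'| ≤ hausdorffDist A A' + hausdorffDist B B' := by
  have hA' : hausdorffEDist A' A ≠ ⊤ := by rwa [hausdorffEDist_comm]
  have hB' : hausdorffEDist B' B ≠ ⊤ := by rwa [hausdorffEDist_comm]
  rw [abs_sub_le_iff, sub_le_iff_le_add, sub_le_iff_le_add]
  constructor
  · calc hausdorffDist A B
        ≤ hausdorffDist A A' + hausdorffDist A' B := hausdorffDist_triangle hA
      _ ≤ hausdorffDist A A' + (hausdorffDist A' B' + hausdorffDist B' B) := by
          gcongr; exact hausdorffDist_triangle' hB'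
      _ = hausdorffDist A A' + hausdorffDist B B' + hausdorffDist A' B' := by
          rw [hausdorffDist_comm (s := B')]; ring
  · calc hausdorffDist A' B'
        ≤ hausdorffDist A' A + hausdorffDist A B' := hausdorffDist_triangle hA'
      _ ≤ hausdorffDist A' A + (hausdorffDist A B + hausdorffDist B B') := by
          gcongr; exact hausdorffDist_triangle' hB
      _ = hausdorffDist A A' + hausdorffDist B B' + hausdorffDist A B := by
          rw [hausdorffDist_comm (s := A')]; ring

lemma hausdorffDist_image_le_hausdorffDist_image_add {S X Y : Type*} [PseudoMetricSpace X]
    [PseudoMetricSpace Y] {f : S → X} {g : S → Y} {A B : Set S} {ε : ℝ} (hε : 0 ≤ ε)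
    (hfg : ∀ a b, dist (g a) (g b) ≤ dist (f a) (f b) + ε)
    (hfin : hausdorffEDist (f '' A) (f '' B) ≠ ⊤) :
    hausdorffDist (g '' A) (g '' B) ≤ hausdorffDist (f '' A) (f '' B) + ε := by
  refine le_of_forall_pos_le_add fun δ hδ => ?_
  have hlt : hausdorffDist (f '' A) (f '' B) < hausdorffDist (f '' A) (f '' B) + δ :=
    lt_add_of_pos_right _ hδ
  have hnonneg : 0 ≤ hausdorffDist (f '' A) (f '' B) := hausdorffDist_nonneg
  apply hausdorffDist_le_of_mem_dist (by positivity)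
  · rintro _ ⟨a, ha, rfl⟩
    obtain ⟨_, ⟨b, hb, rfl⟩, hab⟩ :=
      exists_dist_lt_of_hausdorffDist_lt (mem_image_of_mem f ha) hlt hfin
    exact ⟨g b, mem_image_of_mem g hb, by linarith [hfg a b]⟩
  · rintro _ ⟨b, hb, rfl⟩
    obtain ⟨_, ⟨a, ha, rfl⟩, hab⟩ :=
      exists_dist_lt_of_hausdorffDist_lt' (mem_image_of_mem f hb) hlt hfin
    exact ⟨g a, mem_image_of_mem g ha, by linarith [hfg b a, dist_comm (f a) (f b)]⟩

end HausdorffDist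

section Distortion

variable {X Y : Type*} [PseudoMetricSpace X] [PseudoMetricSpace Y] {f : X → Y} {ε : ℝ}

lemma abs_hausdorffDist_image_sub_hausdorffDist_le {A B : Set X} (hε : 0 ≤ ε)
    (hf : ∀ a b, |dist (f a) (f b) - dist a b| ≤ ε) (hfin : hausdorffEDist A B ≠ ⊤)
    (hfin' : hausdorffEDist (f '' A) (f '' B) ≠ ⊤) :
    |hausdorffDist (f '' A) (f '' B) - hausdorffDist A B| ≤ ε := by
  have hle : hausdorffDist (f '' A) (f '' B) ≤ hausdorffDist (id '' A) (id '' B) + ε :=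
    hausdorffDist_image_le_hausdorffDist_image_add hε
      (fun a b => sub_le_iff_le_add'.1 (abs_sub_le_iff.1 (hf a b)).1) (by rwa [image_id, image_id])
  have hge : hausdorffDist (id '' A) (id '' B) ≤ hausdorffDist (f '' A) (f '' B) + ε :=
    hausdorffDist_image_le_hausdorffDist_image_add hε
      (fun a b => sub_le_iff_le_add'.1 (abs_sub_le_iff.1 (hf a b)).2) hfin'
  rw [image_id, image_id] at hle hge
  exact abs_sub_le_iff.2 ⟨sub_le_iff_le_add'.2 hle, sub_le_iff_le_add'.2 hge⟩

lemma image_closedBall_subset_closedBall_add (hf : ∀ a b, dist (f a) (f b) ≤ dist a b + ε)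
    (x : X) (t : ℝ) : f '' closedBall x t ⊆ closedBall (f x) (t + ε) := by
  rintro _ ⟨a, ha, rfl⟩
  exact (hf a x).trans (by gcongr; exact ha)

lemma hausdorffDist_image_closedBall_closedBall_le (hX : IsApproxGeodesic X)
    (hY : IsApproxGeodesic Y) (hdense : DenseRange f)
    (hf : ∀ a b, |dist (f a) (f b) - dist a b| ≤ ε) (x : X) {t : ℝ} (ht : 0 ≤ t) :
    hausdorffDist (f '' closedBall x t) (closedBall (f x) t) ≤ 2 * ε := by
  have hε : 0 ≤ ε := (abs_nonneg _).trans (hf x x)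
  have hle (a b : X) : dist (f a) (f b) ≤ dist a b + ε :=
    sub_le_iff_le_add'.1 (abs_sub_le_iff.1 (hf a b)).1
  refine le_of_forall_pos_le_add fun δ hδ => hausdorffDist_le_of_mem_dist (by positivity) ?_ ?_
  · intro b hb
    have hb' : dist b (f x) ≤ t + ε := image_closedBall_subset_closedBall_add hle x t hb
    obtain ⟨p, hxp, hpb⟩ : ∃ p, dist (f x) p ≤ t ∧ dist p b < ε + δ :=
      hY ht (by positivity) (by linarith [dist_comm b (f x)])
    exact ⟨p, mem_closedBall'.2 hxp, by linarith [dist_comm b p]⟩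
  · intro b hb
    obtain ⟨a, hba⟩ : ∃ a, dist b (f a) < δ / 3 := hdense.exists_dist_lt b (by positivity)
    have hxa : dist x a ≤ t + δ / 3 + ε := by
      linarith [(abs_sub_le_iff.1 (hf x a)).2, dist_triangle (f x) b (f a), mem_closedBall'.1 hb]
    obtain ⟨p, hxp, hpa⟩ : ∃ p, dist x p ≤ t ∧ dist p a < ε + 2 * δ / 3 :=
      hX ht (by positivity) (by linarith)
    refine ⟨f p, mem_image_of_mem f (mem_closedBall'.2 hxp), ?_⟩
    calc dist b (f p) ≤ dist b (f a) + dist (f a) (f p) := dist_triangle _ _ _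
      _ ≤ δ / 3 + (dist p a + ε) := by rw [dist_comm (f a)]; gcongr; exact hle p a
      _ ≤ 2 * ε + δ := by linarith

lemma abs_hausdorffDist_closedBall_sub_hausdorffDist_closedBall_le (hX : IsApproxGeodesic X)
    (hY : IsApproxGeodesic Y) (hdense : DenseRange f)
    (hf : ∀ a b, |dist (f a) (f b) - dist a b| ≤ ε) (x y : X) {t s : ℝ} (ht : 0 ≤ t)
    (hs : 0 ≤ s) :
    |hausdorffDist (closedBall (f x) t) (closedBall (f y) s)
      - hausdorffDist (closedBall x t) (closedBall y s)| ≤ 5 * ε := by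
  have hε : 0 ≤ ε := (abs_nonneg _).trans (hf x x)
  have hne (z : X) {r : ℝ} (hr : 0 ≤ r) : (f '' closedBall z r).Nonempty :=
    (nonempty_closedBall.2 hr).image f
  have hbdd (z : X) (r : ℝ) : Bornology.IsBounded (f '' closedBall z r) :=
    isBounded_closedBall.subset <| image_closedBall_subset_closedBall_add
      (fun a b => sub_le_iff_le_add'.1 (abs_sub_le_iff.1 (hf a b)).1) z r
  have hfin (z : X) {r : ℝ} (hr : 0 ≤ r) :
      hausdorffEDist (closedBall (f z) r) (f '' closedBall z r) ≠ ⊤ :=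
    hausdorffEDist_ne_top_of_nonempty_of_bounded (nonempty_closedBall.2 hr) (hne z hr)
      isBounded_closedBall (hbdd z r)
  have hball (z : X) {r : ℝ} (hr : 0 ≤ r) :
      hausdorffDist (closedBall (f z) r) (f '' closedBall z r) ≤ 2 * ε := by
    rw [hausdorffDist_comm]
    exact hausdorffDist_image_closedBall_closedBall_le hX hY hdense hf z hr
  have hsource : |hausdorffDist (f '' closedBall x t) (f '' closedBall y s)
      - hausdorffDist (closedBall x t) (closedBall y s)| ≤ ε :=
    abs_hausdorffDist_image_sub_hausdorffDist_le hε hf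
      (hausdorffEDist_ne_top_of_nonempty_of_bounded (nonempty_closedBall.2 ht)
        (nonempty_closedBall.2 hs) isBounded_closedBall isBounded_closedBall)
      (hausdorffEDist_ne_top_of_nonempty_of_bounded (hne x ht) (hne y hs) (hbdd x t) (hbdd y s))
  have htarget := abs_hausdorffDist_sub_hausdorffDist_le (hfin x ht) (hfin y hs)
  calc _ ≤ _ := abs_sub_le _ (hausdorffDist (f '' closedBall x t) (f '' closedBall y s)) _
    _ ≤ 5 * ε := by linarith [hball x ht, hball y hs]

end Distortion

theorem hausdorffDist_closedBall_tendsto_of_tendstoUniformly_general {ι X : Type*} {Y : ι → Type*}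
    [PseudoMetricSpace X] [∀ i, PseudoMetricSpace (Y i)] {l : Filter ι} {f : ∀ i, X → Y i}
    (hX : IsApproxGeodesic X) (hY : ∀ᶠ i in l, IsApproxGeodesic (Y i))
    (hdense : ∀ᶠ i in l, DenseRange (f i))
    (hconv : TendstoUniformly (fun i (p : X × X) => dist (f i p.1) (f i p.2))
      (fun p : X × X => dist p.1 p.2) l)
    (x y : X) {t s : ℝ} (ht : 0 ≤ t) (hs : 0 ≤ s) :
    Filter.Tendsto (fun i => hausdorffDist (closedBall (f i x) t) (closedBall (f i y) s)) l
      (nhds (hausdorffDist (closedBall x t) (closedBall y s))) := by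
  rw [Metric.tendsto_nhds]
  intro ε hε
  filter_upwards [hY, hdense, Metric.tendstoUniformly_iff.1 hconv (ε / 6) (by positivity)]
    with i hYi hdense_i hdist
  have hf (a b : X) : |dist (f i a) (f i b) - dist a b| ≤ ε / 6 := by
    rw [abs_sub_comm]
    exact (hdist (a, b)).le
  calc dist (hausdorffDist (closedBall (f i x) t) (closedBall (f i y) s))
        (hausdorffDist (closedBall x t) (closedBall y s))
      ≤ 5 * (ε / 6) :=
        abs_hausdorffDist_closedBall_sub_hausdorffDist_closedBall_le hX hYi hdense_i hf x y ht hs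
    _ < ε := by linarith

/-- If metrics `d_n` (each making `X` a locally compact length space)
converge uniformly to a metric `d` making `X` a locally compact length space, then the
Hausdorff distances between corresponding closed balls converge. -/
theorem hausdorffDist_closedBall_tendsto_of_tendstoUniformly {X : Type*}
    (D : MetricSpace X) (Dn : ℕ → MetricSpace X)
    (hD_lc : mLocallyCompact D) (hD_len : mIsLengthSpace D)
    (hDn_lc : ∀ n, mLocallyCompact (Dn n)) (hDn_len : ∀ n, mIsLengthSpace (Dn n))
    (hconv : TendstoUniformly (fun n (p : X × X) => mdist (Dn n) p.1 p.2)
      (fun p : X × X => mdist D p.1 p.2) Filter.atTop)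
    (x y : X) (t s : ℝ) (ht : 0 ≤ t) (hs : 0 ≤ s) :
    Filter.Tendsto
      (fun n => mHausdorffDist (Dn n) (mClosedBall (Dn n) x t) (mClosedBall (Dn n) y s))
      Filter.atTop
      (nhds (mHausdorffDist D (mClosedBall D x t) (mClosedBall D y s))) := by
  exact @hausdorffDist_closedBall_tendsto_of_tendstoUniformly_general ℕ X (fun _ => X)
    D.toPseudoMetricSpace (fun n => (Dn n).toPseudoMetricSpace) Filter.atTop (fun _ => id)
    hD_len.isApproxGeodesic (.of_forall fun n => (hDn_len n).isApproxGeodesic)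
    (.of_forall fun n => let _ := Dn n; denseRange_id) hconv x y t s ht hs
end

section
/- Let (X,d) be a complete, locally compact, strongly geodesically complete length space with unique midpoints (for all p,q ∈ X there is exactly one m with d(p,m) = d(m,q) = d(p,q)/2). Then every isometry F of the space (Σ(X), d_H) of compact closed balls maps balls of equal radius to balls of equal radius: for every t ≥ 0 there exists r ≥ 0 such that F({B̄_t(x) : x ∈ X}) = {B̄_r(x) : x ∈ X}; moreover the map f : X → X determined by F(B̄_0(x)) = F({x}) = B̄_R(f(x)) is a surjective isometry of (X,d). Consequently, the natural homomorphism Isom(X,d) → Isom(Σ(X), d_H) sending f to B ↦ f(B) is a group isomorphism. -/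
open Metric Set

/-- A (pseudo-e)metric space is a *length space* if the distance between any two points
equals the infimum of the lengths of continuous curves joining them. -/
def IsLengthSpace (X : Type*) [PseudoEMetricSpace X] : Prop :=
  ∀ x y : X, edist x y =
    ⨅ (γ : ℝ → X) (_ : ContinuousOn γ (Set.Icc (0:ℝ) 1)) (_ : γ 0 = x) (_ : γ 1 = y),
      eVariationOn γ (Set.Icc (0:ℝ) 1)

/-- A *geodesic segment* defined on `[0,a]`: a curve realizing distance,
parameterized by arc length. -/
def IsGeodesicSegment {X : Type*} [PseudoMetricSpace X] (γ : ℝ → X) (a : ℝ) : Prop :=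
  ∀ u ∈ Set.Icc (0:ℝ) a, ∀ v ∈ Set.Icc (0:ℝ) a, dist (γ u) (γ v) = |u - v|

/-- *Strong geodesic extendibility* at `x`: for every `r > 0` and every `y ≠ x` there is a
point `p` with `d(x,p) = r` and a geodesic segment from `y` through `x` to `p`. -/
def StrongGeodesicExtendibilityAt {X : Type*} [PseudoMetricSpace X] (x : X) : Prop :=
  ∀ r > (0:ℝ), ∀ y : X, y ≠ x → ∃ (p : X) (γ : ℝ → X),
    dist x p = r ∧ IsGeodesicSegment γ (dist x y + r) ∧
    γ 0 = y ∧ γ (dist x y) = x ∧ γ (dist x y + r) = p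

/-- The space `Σ(X)` of compact (closed) balls of `X`, as a set of subsets of `X`. -/
def SigmaBalls (X : Type*) [PseudoMetricSpace X] : Set (Set X) :=
  {S | ∃ (x : X) (r : ℝ), 0 ≤ r ∧ S = closedBall x r}

/-!
If `X` has more than one point, extending geodesics shows that `(x, t) ↦ closedBall x t` is an
isometry from the `ℓ¹`-product `X ×₁ [0, ∞)` onto `Σ(X)`. Two points of an `ℓ¹`-product of spaces
with unique midpoints have a unique midpoint exactly when they share a coordinate, so an isometry
`Φ` of `X ×₁ [0, ∞)` preserves this relation. Pairwise alignment of the points of a fibre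
`{x} × [0, ∞)` therefore forces `Φ` to map it onto a whole vertical or a whole horizontal fibre.
The latter is a copy of `X`, which is not a half-line because all its geodesics extend. Hence
vertical fibres go to vertical fibres, and since `[0, ∞)` has no nontrivial isometry, `Φ` is
`f × id` for an isometry `f` of `X`.
-/

open scoped NNReal
open WithLp (toLp)

section Geodesics

variable {X : Type*} [PseudoMetricSpace X]

/-- Metric convexity in Menger's sense, sharpened so that every splitting `dist x y = a + b` is
realized by a point. It encodes what is used of geodesics without parametrized curves. -/
def HasIntermediatePoints (X : Type*) [PseudoMetricSpace X] : Prop :=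
  ∀ (x y : X) (a : ℝ), 0 ≤ a → a ≤ dist x y → ∃ m, dist x m = a ∧ dist m y = dist x y - a

lemma StrongGeodesicExtendibilityAt.exists_dist_eq_dist_add {x y : X}
    (hx : StrongGeodesicExtendibilityAt x) (hyx : y ≠ x) {r : ℝ} (hr : 0 < r) :
    ∃ p, dist x p = r ∧ dist y p = dist x y + r := by
  obtain ⟨p, γ, hxp, hγ, hγ0, -, hγr⟩ := hx r hr y hyx
  have hlen : 0 ≤ dist x y + r := by positivity
  refine ⟨p, hxp, ?_⟩
  rw [← hγ0, ← hγr, hγ 0 ⟨le_rfl, hlen⟩ _ ⟨hlen, le_rfl⟩, hγ0, zero_sub, abs_neg,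
    abs_of_nonneg hlen]

lemma exists_dist_eq_dist_add [Nontrivial X]
    (hsgc : ∀ x : X, StrongGeodesicExtendibilityAt x) (x y : X) {r : ℝ} (hr : 0 ≤ r) :
    ∃ p, dist x p = r ∧ dist y p = dist x y + r := by
  rcases hr.eq_or_lt with rfl | hr
  · exact ⟨x, by simp, by simp [dist_comm]⟩
  rcases eq_or_ne y x with rfl | hyx
  · obtain ⟨z, hzy⟩ := exists_ne y
    obtain ⟨p, hyp, -⟩ := (hsgc y).exists_dist_eq_dist_add hzy hr
    exact ⟨p, hyp, by simp [hyp]⟩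
  · exact (hsgc x).exists_dist_eq_dist_add hyx hr

lemma hasIntermediatePoints_of_strongGeodesicExtendibilityAt
    (hsgc : ∀ x : X, StrongGeodesicExtendibilityAt x) : HasIntermediatePoints X := by
  intro x y a ha hay
  rcases eq_or_ne x y with rfl | hxy
  · obtain rfl : a = 0 := le_antisymm (by simpa using hay) ha
    exact ⟨x, by simp, by simp⟩
  obtain ⟨p, γ, -, hγ, hγ0, hγy, -⟩ := hsgc y 1 one_pos x hxy
  rw [dist_comm y x] at hγ hγy
  have hy : dist x y ∈ Icc 0 (dist x y + 1) := ⟨dist_nonneg, by linarith⟩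
  have ha' : a ∈ Icc 0 (dist x y + 1) := ⟨ha, by linarith⟩
  refine ⟨γ a, ?_, ?_⟩
  · calc dist x (γ a) = dist (γ 0) (γ a) := by rw [hγ0]
      _ = a := by rw [hγ 0 ⟨le_rfl, by linarith⟩ a ha', zero_sub, abs_neg, abs_of_nonneg ha]
  · calc dist (γ a) y = dist (γ a) (γ (dist x y)) := by rw [hγy]
      _ = dist x y - a := by
        rw [hγ a ha' _ hy, abs_sub_comm, abs_of_nonneg (sub_nonneg.2 hay)]

lemma isEmpty_nnreal_isometryEquiv (hsgc : ∀ x : X, StrongGeodesicExtendibilityAt x) :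
    IsEmpty (ℝ≥0 ≃ᵢ X) := by
  refine ⟨fun e ↦ ?_⟩
  obtain ⟨p, hp0, hp1⟩ := (hsgc (e 0)).exists_dist_eq_dist_add
    (e.injective.ne one_ne_zero) one_pos
  obtain ⟨c, rfl⟩ := e.surjective p
  simp only [e.dist_eq, NNReal.dist_eq, NNReal.coe_zero, NNReal.coe_one] at hp0 hp1
  have hc : (c : ℝ) = 1 := by simpa using hp0
  norm_num [hc] at hp1

end Geodesics

section UniqueMidpoint

variable {Z W : Type*} [PseudoMetricSpace Z] [PseudoMetricSpace W]

/-- Exactly one point lies halfway between `p` and `q`. -/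
def HasUniqueMidpoint (p q : Z) : Prop :=
  ∃! m : Z, dist p m = dist p q / 2 ∧ dist m q = dist p q / 2

lemma hasUniqueMidpoint_apply_iff (e : Z ≃ᵢ W) {p q : Z} :
    HasUniqueMidpoint (e p) (e q) ↔ HasUniqueMidpoint p q :=
  (e.toEquiv.existsUnique_congr fun m ↦ by simp [e.dist_eq]).symm

end UniqueMidpoint

section HalfLine

lemma hasIntermediatePoints_nnreal : HasIntermediatePoints ℝ≥0 := by
  intro t s a ha has
  obtain ⟨m, hm, htm, hms⟩ : ∃ m : ℝ, 0 ≤ m ∧ |t - m| = a ∧ |m - s| = |(t : ℝ) - s| - a := by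
    rw [NNReal.dist_eq] at has
    rcases le_total (t : ℝ) s with hts | hst
    · exact ⟨t + a, by positivity, by grind, by grind⟩
    · exact ⟨t - a, by grind [s.coe_nonneg], by grind, by grind⟩
  lift m to ℝ≥0 using hm
  exact ⟨m, htm, hms⟩

lemma hasUniqueMidpoint_nnreal (t s : ℝ≥0) : HasUniqueMidpoint t s := by
  obtain ⟨m, hm⟩ := hasIntermediatePoints_nnreal t s (dist t s / 2) (by positivity)
    (by linarith [dist_nonneg (x := t) (y := s)])
  refine ⟨m, ⟨hm.1, by linarith [hm.2]⟩, fun n hn ↦ NNReal.coe_injective ?_⟩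
  simp only [NNReal.dist_eq] at hm hn
  grind

instance subsingleton_nnreal_isometryEquiv : Subsingleton (ℝ≥0 ≃ᵢ ℝ≥0) := by
  refine subsingleton_of_forall_eq (.refl ℝ≥0) fun e ↦ ?_
  obtain ⟨b, hb⟩ := e.surjective 0
  have he : ∀ t, (e t : ℝ) = |(t : ℝ) - b| := fun t ↦ by
    simpa [hb, NNReal.dist_eq] using e.dist_eq t b
  -- `e` takes the same value at `0` and at `2 * b`, the reflection of `0` in its zero `b`.
  have hb0 : b = 0 := by
    have h2b : 2 * b = 0 := e.injective <| NNReal.coe_injective <| by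
      rw [he, he, NNReal.coe_mul, NNReal.coe_ofNat, NNReal.coe_zero, two_mul, add_sub_cancel_right,
        zero_sub, abs_neg]
    simpa using h2b
  ext t
  change (e t : ℝ) = t
  simp [he, hb0]

end HalfLine

section L1Product

variable {X Y : Type*} [PseudoMetricSpace X] [PseudoMetricSpace Y]

lemma l1Prod_dist_eq (z w : WithLp 1 (X × Y)) :
    dist z w = dist z.fst w.fst + dist z.snd w.snd := by
  simp [WithLp.prod_dist_eq_add (p := 1) (by simp)]

lemma not_hasUniqueMidpoint_of_dist_fst_le_dist_snd (hY : HasIntermediatePoints Y)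
    {z w : WithLp 1 (X × Y)} (hfst : z.fst ≠ w.fst)
    (hle : dist z.fst w.fst ≤ dist z.snd w.snd) : ¬ HasUniqueMidpoint z w := by
  intro h
  have hd : 0 ≤ dist z.fst w.fst := dist_nonneg
  -- One midpoint moves horizontally first, the other vertically first.
  obtain ⟨m, hzm, hmw⟩ := hY z.snd w.snd ((dist z.snd w.snd - dist z.fst w.fst) / 2)
    (by linarith) (by linarith)
  obtain ⟨n, hzn, hnw⟩ := hY z.snd w.snd ((dist z.snd w.snd + dist z.fst w.fst) / 2)
    (by linarith) (by linarith)
  have heq : toLp 1 (w.fst, m) = toLp 1 (z.fst, n) := by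
    apply h.unique <;> simp only [l1Prod_dist_eq, WithLp.toLp_fst, WithLp.toLp_snd, dist_self] <;>
      constructor <;> linarith
  exact hfst (congrArg WithLp.fst heq).symm

/-- `z` and `w` lie in a common fibre of one of the two projections of the product. -/
def Aligned {α β : Type*} (z w : WithLp 1 (α × β)) : Prop :=
  z.fst = w.fst ∨ z.snd = w.snd

lemma HasUniqueMidpoint.toLp_mk_left {X Y : Type*} [MetricSpace X] [PseudoMetricSpace Y] (x : X)
    {t s : Y} (h : HasUniqueMidpoint t s) :
    HasUniqueMidpoint (toLp 1 (x, t)) (toLp 1 (x, s)) := by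
  obtain ⟨m, hm, hm_unique⟩ := h
  refine ⟨toLp 1 (x, m), by simpa [l1Prod_dist_eq] using hm, fun n hn ↦ ?_⟩
  simp only [l1Prod_dist_eq, WithLp.toLp_fst, WithLp.toLp_snd, dist_self, zero_add] at hn
  have hfst : dist x n.fst = 0 := by
    have := dist_triangle t n.snd s
    linarith [dist_nonneg (x := x) (y := n.fst), dist_comm x n.fst]
  have hsnd : n.snd = m := hm_unique _ ⟨by linarith, by linarith [dist_comm x n.fst]⟩
  rw [← hsnd, dist_eq_zero.1 hfst]
  rfl

lemma HasUniqueMidpoint.toLp_mk_right {X Y : Type*} [PseudoMetricSpace X] [MetricSpace Y] {x y : X}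
    (h : HasUniqueMidpoint x y) (t : Y) :
    HasUniqueMidpoint (toLp 1 (x, t)) (toLp 1 (y, t)) :=
  (hasUniqueMidpoint_apply_iff (.withLpProdComm 1 Y X)).2 (h.toLp_mk_left t)

lemma hasUniqueMidpoint_l1Prod_iff {X Y : Type*} [MetricSpace X] [MetricSpace Y]
    (hX : HasIntermediatePoints X) (hY : HasIntermediatePoints Y)
    (hmidX : ∀ x y : X, HasUniqueMidpoint x y) (hmidY : ∀ t s : Y, HasUniqueMidpoint t s)
    {z w : WithLp 1 (X × Y)} : HasUniqueMidpoint z w ↔ Aligned z w := by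
  constructor
  · intro h
    by_contra hzw
    obtain ⟨hfst, hsnd⟩ := not_or.1 hzw
    rcases le_total (dist z.fst w.fst) (dist z.snd w.snd) with hle | hle
    · exact not_hasUniqueMidpoint_of_dist_fst_le_dist_snd hY hfst hle h
    · exact not_hasUniqueMidpoint_of_dist_fst_le_dist_snd hX
        (z := .toLp 1 (z.snd, z.fst)) (w := .toLp 1 (w.snd, w.fst)) hsnd hle
        ((hasUniqueMidpoint_apply_iff (.withLpProdComm 1 X Y)).2 h)
  · obtain ⟨x, t⟩ := z
    obtain ⟨y, s⟩ := w
    rintro (rfl | rfl)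
    · exact (hmidY t s).toLp_mk_left x
    · exact (hmidX x y).toLp_mk_right t

end L1Product

section Fibres

lemma forall_eq_or_forall_eq {ι α β : Type*} {u : ι → α} {v : ι → β}
    (h : ∀ i j, u i = u j ∨ v i = v j) : (∀ i j, u i = u j) ∨ (∀ i j, v i = v j) := by
  by_contra! hne
  obtain ⟨⟨i, j, hij⟩, k, l, hkl⟩ := hne
  grind [h i k, h i l, h j k, h j l]

lemma exists_toLp_mk_eq_of_forall_aligned {α β : Type*} [Nontrivial β]
    {φ : WithLp 1 (α × β) → WithLp 1 (α × β)} (hsurj : Function.Surjective φ)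
    (hφ : ∀ z w, Aligned (φ z) (φ w) → Aligned z w) {x : α} {w : WithLp 1 (α × β)}
    (hw : ∀ t, Aligned w (φ (toLp 1 (x, t)))) : ∃ t, φ (toLp 1 (x, t)) = w := by
  obtain ⟨⟨y, s⟩, rfl⟩ := hsurj w
  obtain ⟨t, hts⟩ := exists_ne s
  obtain rfl : y = x := (hφ _ _ (hw t)).resolve_right hts.symm
  exact ⟨s, rfl⟩

variable {X Y : Type*} [MetricSpace X] [MetricSpace Y] [Nontrivial Y]
  {Φ : WithLp 1 (X × Y) ≃ᵢ WithLp 1 (X × Y)}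

lemma fst_apply_toLp_mk_eq [IsEmpty (Y ≃ᵢ X)] (hΦ : ∀ z w, Aligned (Φ z) (Φ w) ↔ Aligned z w)
    (x : X) (t s : Y) : (Φ (toLp 1 (x, t))).fst = (Φ (toLp 1 (x, s))).fst := by
  have haligned : ∀ t s, Aligned (Φ (toLp 1 (x, t))) (Φ (toLp 1 (x, s))) :=
    fun t s ↦ (hΦ _ _).2 (.inl rfl)
  refine (forall_eq_or_forall_eq haligned).elim (· t s) fun hsnd ↦ isEmptyElim (α := Y ≃ᵢ X) ?_
  have hsurj : ∀ y, ∃ r, Φ (toLp 1 (x, r)) = toLp 1 (y, (Φ (toLp 1 (x, t))).snd) :=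
    fun y ↦ exists_toLp_mk_eq_of_forall_aligned Φ.surjective (fun z w ↦ (hΦ z w).1)
      fun r ↦ .inr (hsnd t r)
  choose g hg using hsurj
  refine .mk' (fun r ↦ (Φ (toLp 1 (x, r))).fst) g (fun y ↦ by simp [hg]) (.of_dist_eq fun r r' ↦ ?_)
  simpa [l1Prod_dist_eq, hsnd r r'] using Φ.dist_eq (toLp 1 (x, r)) (toLp 1 (x, r'))

lemma snd_apply_toLp_mk [IsEmpty (Y ≃ᵢ X)] [Subsingleton (Y ≃ᵢ Y)]
    (hΦ : ∀ z w, Aligned (Φ z) (Φ w) ↔ Aligned z w) (x : X) (t : Y) :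
    (Φ (toLp 1 (x, t))).snd = t := by
  have hfst := fst_apply_toLp_mk_eq hΦ x
  have hsurj : ∀ s, ∃ r, Φ (toLp 1 (x, r)) = toLp 1 ((Φ (toLp 1 (x, t))).fst, s) :=
    fun s ↦ exists_toLp_mk_eq_of_forall_aligned Φ.surjective (fun z w ↦ (hΦ z w).1)
      fun r ↦ .inl (hfst t r)
  choose g hg using hsurj
  have hiso : Isometry fun r ↦ (Φ (toLp 1 (x, r))).snd := .of_dist_eq fun r r' ↦ by
    simpa [l1Prod_dist_eq, hfst r r'] using Φ.dist_eq (toLp 1 (x, r)) (toLp 1 (x, r'))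
  exact DFunLike.congr_fun
    (Subsingleton.elim (IsometryEquiv.mk' _ g (fun s ↦ by simp [hg]) hiso) (.refl Y)) t

lemma exists_apply_toLp_mk_eq [IsEmpty (Y ≃ᵢ X)] [Subsingleton (Y ≃ᵢ Y)]
    (hΦ : ∀ z w, Aligned (Φ z) (Φ w) ↔ Aligned z w) (x : X) :
    ∃ y, ∀ t, Φ (toLp 1 (x, t)) = toLp 1 (y, t) := by
  obtain ⟨s⟩ : Nonempty Y := inferInstance
  exact ⟨_, fun t ↦ WithLp.ofLp_injective 1
    (Prod.ext (fst_apply_toLp_mk_eq hΦ x t s) (snd_apply_toLp_mk hΦ x t))⟩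

lemma exists_eq_withLpProdCongr_refl [IsEmpty (Y ≃ᵢ X)] [Subsingleton (Y ≃ᵢ Y)]
    (hΦ : ∀ z w, Aligned (Φ z) (Φ w) ↔ Aligned z w) :
    ∃ f : X ≃ᵢ X, Φ = f.withLpProdCongr 1 (.refl Y) := by
  have hΦ' : ∀ z w, Aligned (Φ.symm z) (Φ.symm w) ↔ Aligned z w := fun z w ↦ by
    simp [← hΦ (Φ.symm z)]
  choose f hf using exists_apply_toLp_mk_eq hΦ
  choose g hg using exists_apply_toLp_mk_eq hΦ'
  obtain ⟨s⟩ : Nonempty Y := inferInstance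
  have hfg : ∀ x, f (g x) = x := fun x ↦ by
    have := hf (g x) s
    rw [← hg, Φ.apply_symm_apply] at this
    exact (congrArg WithLp.fst this).symm
  have hiso : Isometry f := .of_dist_eq fun x y ↦ by
    simpa [hf, l1Prod_dist_eq] using Φ.dist_eq (toLp 1 (x, s)) (toLp 1 (y, s))
  exact ⟨.mk' f g hfg hiso, IsometryEquiv.ext fun z ↦ hf z.fst z.snd⟩

end Fibres

section HausdorffDist

variable {X : Type*} [PseudoMetricSpace X]

lemma HasIntermediatePoints.exists_mem_closedBall_dist_le (hX : HasIntermediatePoints X)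
    {x y z : X} {t s : ℝ} (hs : 0 ≤ s) (hz : z ∈ closedBall x t) :
    ∃ w ∈ closedBall y s, dist z w ≤ dist x y + |t - s| := by
  rcases le_total (dist y z) s with hle | hle
  · exact ⟨z, mem_closedBall'.2 hle, by rw [dist_self]; positivity⟩
  · obtain ⟨w, hyw, hwz⟩ := hX y z s hs hle
    refine ⟨w, mem_closedBall'.2 hyw.le, ?_⟩
    calc dist z w = dist y z - s := by rw [dist_comm, hwz]
      _ ≤ dist x y + dist z x - s := by
        linarith [dist_triangle y x z, dist_comm x y, dist_comm x z]
      _ ≤ dist x y + |t - s| := by linarith [mem_closedBall.1 hz, le_abs_self (t - s)]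

lemma hausdorffDist_closedBall_le (hX : HasIntermediatePoints X) (x y : X) {t s : ℝ}
    (ht : 0 ≤ t) (hs : 0 ≤ s) :
    hausdorffDist (closedBall x t) (closedBall y s) ≤ dist x y + |t - s| := by
  refine hausdorffDist_le_of_mem_dist (by positivity)
    (fun z hz ↦ hX.exists_mem_closedBall_dist_le hs hz) fun z hz ↦ ?_
  rw [dist_comm x, abs_sub_comm]
  exact hX.exists_mem_closedBall_dist_le ht hz

lemma dist_add_sub_le_hausdorffDist_closedBall [Nontrivial X]
    (hsgc : ∀ x : X, StrongGeodesicExtendibilityAt x) (x y : X) {t s : ℝ}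
    (ht : 0 ≤ t) (hs : 0 ≤ s) :
    dist x y + (t - s) ≤ hausdorffDist (closedBall x t) (closedBall y s) := by
  obtain ⟨p, hxp, hyp⟩ := exists_dist_eq_dist_add hsgc x y ht
  have hfinite : hausdorffEDist (closedBall x t) (closedBall y s) ≠ ⊤ :=
    hausdorffEDist_ne_top_of_nonempty_of_bounded (nonempty_closedBall.2 ht)
      (nonempty_closedBall.2 hs) isBounded_closedBall isBounded_closedBall
  by_contra! hlt
  obtain ⟨w, hw, hpw⟩ :=
    exists_dist_lt_of_hausdorffDist_lt (mem_closedBall'.2 hxp.le) hlt hfinite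
  linarith [dist_triangle_right y p w, mem_closedBall'.1 hw]

lemma hausdorffDist_closedBall [Nontrivial X]
    (hsgc : ∀ x : X, StrongGeodesicExtendibilityAt x) (x y : X) {t s : ℝ}
    (ht : 0 ≤ t) (hs : 0 ≤ s) :
    hausdorffDist (closedBall x t) (closedBall y s) = dist x y + |t - s| := by
  refine le_antisymm (hausdorffDist_closedBall_le
    (hasIntermediatePoints_of_strongGeodesicExtendibilityAt hsgc) x y ht hs) ?_
  have hxy := dist_add_sub_le_hausdorffDist_closedBall hsgc x y ht hs
  have hyx := dist_add_sub_le_hausdorffDist_closedBall hsgc y x hs ht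
  rw [hausdorffDist_comm, dist_comm] at hyx
  rcases abs_cases (t - s) with h | h <;> linarith

end HausdorffDist

section BallSpace

variable {X : Type*} [PseudoMetricSpace X]

/-- The parametrization `(x, t) ↦ B̄_t(x)` of `Σ(X)`, on the product on which it is an isometry. -/
def ballOf (z : WithLp 1 (X × ℝ≥0)) : Set X :=
  closedBall z.fst z.snd

lemma ballOf_mem_sigmaBalls (z : WithLp 1 (X × ℝ≥0)) : ballOf z ∈ SigmaBalls X :=
  ⟨z.fst, z.snd, z.snd.coe_nonneg, rfl⟩

lemma exists_ballOf_eq {A : Set X} (hA : A ∈ SigmaBalls X) :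
    ∃ z : WithLp 1 (X × ℝ≥0), ballOf z = A := by
  obtain ⟨x, t, ht, rfl⟩ := hA
  exact ⟨toLp 1 (x, ⟨t, ht⟩), rfl⟩

lemma eq_univ_of_mem_sigmaBalls [Subsingleton X] {A : Set X} (hA : A ∈ SigmaBalls X) :
    A = univ := by
  obtain ⟨x, t, ht, rfl⟩ := hA
  exact (nonempty_closedBall.2 ht).eq_univ

lemma hausdorffDist_ballOf [Nontrivial X] (hsgc : ∀ x : X, StrongGeodesicExtendibilityAt x)
    (z w : WithLp 1 (X × ℝ≥0)) : hausdorffDist (ballOf z) (ballOf w) = dist z w := by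
  rw [l1Prod_dist_eq, NNReal.dist_eq]
  exact hausdorffDist_closedBall hsgc _ _ z.snd.coe_nonneg w.snd.coe_nonneg

lemma exists_isometryEquiv_apply_ballOf {X : Type*} [MetricSpace X] [Nontrivial X]
    (hsgc : ∀ x : X, StrongGeodesicExtendibilityAt x)
    {F : Set X → Set X} (hmaps : MapsTo F (SigmaBalls X) (SigmaBalls X))
    (hsurj : SurjOn F (SigmaBalls X) (SigmaBalls X))
    (hFiso : ∀ A ∈ SigmaBalls X, ∀ B ∈ SigmaBalls X,
      hausdorffDist (F A) (F B) = hausdorffDist A B) :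
    ∃ Φ : WithLp 1 (X × ℝ≥0) ≃ᵢ WithLp 1 (X × ℝ≥0), ∀ z, F (ballOf z) = ballOf (Φ z) := by
  choose φ hφ using fun z : WithLp 1 (X × ℝ≥0) ↦ exists_ballOf_eq (hmaps (ballOf_mem_sigmaBalls z))
  have hiso : Isometry φ := .of_dist_eq fun z w ↦ by
    rw [← hausdorffDist_ballOf hsgc, hφ, hφ,
      hFiso _ (ballOf_mem_sigmaBalls z) _ (ballOf_mem_sigmaBalls w), hausdorffDist_ballOf hsgc]
  have hφsurj : Function.Surjective φ := fun w ↦ by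
    obtain ⟨A, hA, hFA⟩ := hsurj (ballOf_mem_sigmaBalls w)
    obtain ⟨z, rfl⟩ := exists_ballOf_eq hA
    refine ⟨z, dist_eq_zero.1 ?_⟩
    rw [← hausdorffDist_ballOf hsgc, hφ, hFA, hausdorffDist_self_zero]
  exact ⟨⟨.ofBijective φ ⟨hiso.injective, hφsurj⟩, hiso⟩, fun z ↦ (hφ z).symm⟩

lemma exists_isometryEquiv_eqOn_image {X : Type*} [MetricSpace X]
    (hsgc : ∀ x : X, StrongGeodesicExtendibilityAt x)
    (hmid : ∀ p q : X, HasUniqueMidpoint p q)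
    {F : Set X → Set X} (hmaps : MapsTo F (SigmaBalls X) (SigmaBalls X))
    (hsurj : SurjOn F (SigmaBalls X) (SigmaBalls X))
    (hFiso : ∀ A ∈ SigmaBalls X, ∀ B ∈ SigmaBalls X,
      hausdorffDist (F A) (F B) = hausdorffDist A B) :
    ∃ f : X ≃ᵢ X, EqOn F (f '' ·) (SigmaBalls X) := by
  rcases subsingleton_or_nontrivial X with _ | _
  · refine ⟨.refl X, fun A hA ↦ ?_⟩
    rw [eq_univ_of_mem_sigmaBalls (hmaps hA), eq_univ_of_mem_sigmaBalls hA]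
    exact (image_univ_of_surjective (IsometryEquiv.refl X).surjective).symm
  have hX := hasIntermediatePoints_of_strongGeodesicExtendibilityAt hsgc
  have := isEmpty_nnreal_isometryEquiv hsgc
  obtain ⟨Φ, hFΦ⟩ := exists_isometryEquiv_apply_ballOf hsgc hmaps hsurj hFiso
  have hΦ : ∀ z w, Aligned (Φ z) (Φ w) ↔ Aligned z w := fun z w ↦ by
    simp only [← hasUniqueMidpoint_l1Prod_iff hX hasIntermediatePoints_nnreal hmid
      hasUniqueMidpoint_nnreal, hasUniqueMidpoint_apply_iff Φ]
  obtain ⟨f, rfl⟩ := exists_eq_withLpProdCongr_refl hΦ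
  refine ⟨f, fun A hA ↦ ?_⟩
  obtain ⟨z, rfl⟩ := exists_ballOf_eq hA
  rw [hFΦ]
  exact (f.image_closedBall z.fst z.snd).symm

end BallSpace

theorem isom_of_ball_space_general {X : Type*} [MetricSpace X]
    (hsgc : ∀ x : X, StrongGeodesicExtendibilityAt x)
    (hmid : ∀ p q : X, ∃! m : X, dist p m = dist p q / 2 ∧ dist m q = dist p q / 2)
    (F : Set X → Set X) (hFbij : Set.BijOn F (SigmaBalls X) (SigmaBalls X))
    (hFiso : ∀ A ∈ SigmaBalls X, ∀ B ∈ SigmaBalls X,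
      Metric.hausdorffDist (F A) (F B) = Metric.hausdorffDist A B) :
    (∀ t : ℝ, 0 ≤ t → ∃ r : ℝ, 0 ≤ r ∧
        F '' {S | ∃ x : X, S = closedBall x t} = {S | ∃ x : X, S = closedBall x r}) ∧
      (∃ R : ℝ, 0 ≤ R ∧ ∃ f : X → X,
        (∀ x : X, F {x} = closedBall (f x) R) ∧ Isometry f ∧ Function.Surjective f) ∧
      (∃! f : X ≃ᵢ X, ∀ A ∈ SigmaBalls X, F A = f '' A) := by
  obtain ⟨f, hf⟩ := exists_isometryEquiv_eqOn_image hsgc hmid hFbij.mapsTo hFbij.surjOn hFiso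
  have hball : ∀ x t, 0 ≤ t → F (closedBall x t) = closedBall (f x) t := fun x t ht ↦
    (hf ⟨x, t, ht, rfl⟩).trans (f.image_closedBall x t)
  have hsingleton : ∀ x, F {x} = {f x} := fun x ↦ by simpa using hball x 0 le_rfl
  refine ⟨fun t ht ↦ ⟨t, ht, Subset.antisymm ?_ ?_⟩,
    ⟨0, le_rfl, f, by simpa using hsingleton, f.isometry, f.surjective⟩, f, hf, fun g hg ↦ ?_⟩
  · rintro _ ⟨_, ⟨x, rfl⟩, rfl⟩
    exact ⟨f x, hball x t ht⟩
  · rintro _ ⟨y, rfl⟩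
    exact ⟨_, ⟨f.symm y, rfl⟩, by rw [hball _ t ht, f.apply_symm_apply]⟩
  · ext x
    have hgx := hg {x} ⟨x, 0, le_rfl, closedBall_zero.symm⟩
    rw [hsingleton, image_singleton] at hgx
    exact (singleton_injective hgx).symm

/-- Let `(X,d)` be a complete, locally compact, strongly geodesically
complete length space with unique midpoints, and let `F` be an isometry of
`(Σ(X), d_H)` (a bijection of `Σ(X)` preserving the Hausdorff distance). Then:
(i) `F` maps balls of equal radius to balls of equal radius;
(ii) the map `f : X → X` determined by `F({x}) = B̄_R(f(x))` is a surjective isometry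
of `(X,d)`; and
(iii) there exists a unique isometry `f` of `X` with `F(B) = f(B)` for all `B ∈ Σ(X)`,
i.e. the natural homomorphism `Isom(X,d) → Isom(Σ(X), d_H)`, `f ↦ (B ↦ f(B))`, is a
group isomorphism. -/
theorem isom_of_ball_space {X : Type*} [MetricSpace X] [CompleteSpace X]
    [LocallyCompactSpace X] (hX : IsLengthSpace X)
    (hsgc : ∀ x : X, StrongGeodesicExtendibilityAt x)
    (hmid : ∀ p q : X, ∃! m : X, dist p m = dist p q / 2 ∧ dist m q = dist p q / 2)
    (F : Set X → Set X) (hFbij : Set.BijOn F (SigmaBalls X) (SigmaBalls X))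
    (hFiso : ∀ A ∈ SigmaBalls X, ∀ B ∈ SigmaBalls X,
      Metric.hausdorffDist (F A) (F B) = Metric.hausdorffDist A B) :
    (∀ t : ℝ, 0 ≤ t → ∃ r : ℝ, 0 ≤ r ∧
        F '' {S | ∃ x : X, S = closedBall x t} = {S | ∃ x : X, S = closedBall x r}) ∧
      (∃ R : ℝ, 0 ≤ R ∧ ∃ f : X → X,
        (∀ x : X, F {x} = closedBall (f x) R) ∧ Isometry f ∧ Function.Surjective f) ∧
      (∃! f : X ≃ᵢ X, ∀ A ∈ SigmaBalls X, F A = f '' A) := by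
  exact isom_of_ball_space_general hsgc hmid F hFbij hFiso
end
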